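/- arXiv:1006.1561 — 2 statements merged into one kernel-verified Lean document; each statement's English description precedes it below -/
import Mathlib

section
/- Let f : ℝ → ℝ be differentiable on an open interval I containing [0,∞), let 0 ≤ a < b, suppose f' is integrable on [a,b], let p > 1 and q = p/(p-1), suppose |f'|^q is convex on [a,b], and suppose |f'(a)| = |f'(b)| = |f'((a+b)/2)|. Then |f((a+b)/2) - (1/(b-a))·∫_a^b f(u) du| ≤ ((b-a)/2)·|f'((a+b)/2)|. -/
open MeasureTheory Set intervalIntegral

/-!
If `‖f'‖ ^ q` is convex for some `q > 0`, then `‖f'‖` is quasiconvex, hence bounded on `[a, b]` by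
its larger endpoint value `C`. So `f` is `C`-Lipschitz, and averaging
`‖f x - f u‖ ≤ C * |x - u|` over `u ∈ [a, b]` gives Ostrowski's inequality; at the midpoint the
average of `|x - u|` is `(b - a) / 4`.
-/

theorem quasiconvexOn_of_convexOn_rpow {E : Type*} [AddCommMonoid E] [Module ℝ E] {s : Set E}
    {g : E → ℝ} {q : ℝ} (hq : 0 < q) (hg : ∀ x ∈ s, 0 ≤ g x)
    (hconv : ConvexOn ℝ s fun x => g x ^ q) : QuasiconvexOn ℝ s g := by
  refine quasiconvexOn_iff_le_max.2 ⟨hconv.1, fun x hx y hy t r ht hr htr => ?_⟩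
  have hmem : t • x + r • y ∈ s := hconv.1 hx hy ht hr htr
  have hle : g (t • x + r • y) ^ q ≤ max (g x ^ q) (g y ^ q) :=
    (quasiconvexOn_iff_le_max.1 hconv.quasiconvexOn).2 hx hy ht hr htr
  rwa [le_max_iff, Real.rpow_le_rpow_iff (hg _ hmem) (hg x hx) hq,
    Real.rpow_le_rpow_iff (hg _ hmem) (hg y hy) hq, ← le_max_iff] at hle

theorem le_max_of_quasiconvexOn_Icc {g : ℝ → ℝ} {a b x : ℝ}
    (hg : QuasiconvexOn ℝ (Icc a b) g) (hx : x ∈ Icc a b) : g x ≤ max (g a) (g b) := by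
  have hab : a ≤ b := hx.1.trans hx.2
  have hsub : Icc a b ⊆ {y ∈ Icc a b | g y ≤ max (g a) (g b)} :=
    (hg _).ordConnected.out ⟨left_mem_Icc.2 hab, le_max_left _ _⟩
      ⟨right_mem_Icc.2 hab, le_max_right _ _⟩
  exact (hsub hx).2

theorem integral_abs_sub_of_mem_Icc {a b x : ℝ} (hx : x ∈ Icc a b) :
    ∫ u in a..b, |x - u| = ((x - a) ^ 2 + (b - x) ^ 2) / 2 := by
  have hint (c d : ℝ) : IntervalIntegrable (fun u => |x - u|) volume c d :=
    (by fun_prop : Continuous fun u => |x - u|).intervalIntegrable c d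
  have hleft : ∫ u in a..x, |x - u| = ∫ u in a..x, (x - u) :=
    integral_congr fun u hu => abs_of_nonneg (sub_nonneg.2 (uIcc_of_le hx.1 ▸ hu).2)
  have hright : ∫ u in x..b, |x - u| = ∫ u in x..b, (u - x) :=
    integral_congr fun u hu =>
      (abs_sub_comm x u).trans (abs_of_nonneg (sub_nonneg.2 (uIcc_of_le hx.2 ▸ hu).1))
  rw [← integral_add_adjacent_intervals (hint a x) (hint x b), hleft, hright,
    integral_comp_sub_left fun u => u, integral_comp_sub_right fun u => u, integral_id, integral_id]
  ring

section Ostrowski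

variable {E : Type*} [NormedAddCommGroup E] [NormedSpace ℝ E] [CompleteSpace E]
  {f f' : ℝ → E} {a b C x : ℝ}

theorem norm_sub_average_le_of_norm_sub_le (hab : a < b) (hx : x ∈ Icc a b)
    (hint : IntervalIntegrable f volume a b) (hf : ∀ u ∈ Icc a b, ‖f x - f u‖ ≤ C * |x - u|) :
    ‖f x - (b - a)⁻¹ • ∫ u in a..b, f u‖ ≤
      C * (((x - a) ^ 2 + (b - x) ^ 2) / (2 * (b - a))) := by
  have hba : 0 < b - a := sub_pos.2 hab
  have haverage : f x - (b - a)⁻¹ • ∫ u in a..b, f u = (b - a)⁻¹ • ∫ u in a..b, (f x - f u) := by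
    rw [integral_sub intervalIntegrable_const hint, intervalIntegral.integral_const, smul_sub,
      inv_smul_smul₀ hba.ne']
  have hbound : ‖∫ u in a..b, (f x - f u)‖ ≤ ∫ u in a..b, C * |x - u| :=
    norm_integral_le_of_norm_le hab.le
      (.of_forall fun u hu => hf u (Ioc_subset_Icc_self hu))
      ((by fun_prop : Continuous fun u => C * |x - u|).intervalIntegrable a b)
  calc ‖f x - (b - a)⁻¹ • ∫ u in a..b, f u‖
      = (b - a)⁻¹ * ‖∫ u in a..b, (f x - f u)‖ := by
        rw [haverage, norm_smul, Real.norm_of_nonneg (inv_nonneg.2 hba.le)]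
    _ ≤ (b - a)⁻¹ * ∫ u in a..b, C * |x - u| := by gcongr
    _ = C * (((x - a) ^ 2 + (b - x) ^ 2) / (2 * (b - a))) := by
        rw [intervalIntegral.integral_const_mul, integral_abs_sub_of_mem_Icc hx]
        field_simp

theorem norm_sub_average_le_of_norm_hasDerivWithinAt_le (hab : a < b) (hx : x ∈ Icc a b)
    (hf : ∀ u ∈ Icc a b, HasDerivWithinAt f (f' u) (Icc a b) u)
    (hC : ∀ u ∈ Icc a b, ‖f' u‖ ≤ C) :
    ‖f x - (b - a)⁻¹ • ∫ u in a..b, f u‖ ≤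
      C * (((x - a) ^ 2 + (b - x) ^ 2) / (2 * (b - a))) := by
  have hcont : ContinuousOn f (Icc a b) := fun u hu => (hf u hu).continuousWithinAt
  exact norm_sub_average_le_of_norm_sub_le hab hx (hcont.intervalIntegrable_of_Icc hab.le)
    fun u hu => (convex_Icc a b).norm_image_sub_le_of_norm_hasDerivWithin_le hf hC hu hx

theorem stmt_10_general (hab : a < b)
    (hf : ∀ u ∈ Icc a b, HasDerivWithinAt f (f' u) (Icc a b) u)
    (hf' : QuasiconvexOn ℝ (Icc a b) fun u => ‖f' u‖) :
    ‖f ((a + b) / 2) - (b - a)⁻¹ • ∫ u in a..b, f u‖ ≤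
      (b - a) / 4 * max ‖f' a‖ ‖f' b‖ := by
  have hmid : (a + b) / 2 ∈ Icc a b := ⟨by linarith, by linarith⟩
  have hba : b - a ≠ 0 := (sub_pos.2 hab).ne'
  refine (norm_sub_average_le_of_norm_hasDerivWithinAt_le hab hmid hf
    fun u hu => le_max_of_quasiconvexOn_Icc hf' hu).trans_eq ?_
  field_simp
  ring

end Ostrowski

/-- Remark 2.4 (F): `|f'|^q` convex on `[a,b]` and `|f'(a)| = |f'(b)| = |f'((a+b)/2)|`. -/
theorem stmt_10 (f : ℝ → ℝ) (I : Set ℝ) (hIopen : IsOpen I) (hIconn : I.OrdConnected)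
    (hIci : Set.Ici (0:ℝ) ⊆ I) (hf : ∀ y ∈ I, DifferentiableAt ℝ f y)
    (a b : ℝ) (ha : 0 ≤ a) (hab : a < b)
    (hint : IntervalIntegrable (deriv f) volume a b)
    (p q : ℝ) (hp : 1 < p) (hq : q = p / (p - 1))
    (hconv : ConvexOn ℝ (Set.Icc a b) (fun u => |deriv f u| ^ q))
    (heq1 : |deriv f a| = |deriv f b|)
    (heq2 : |deriv f b| = |deriv f ((a + b) / 2)|) :
    |f ((a + b) / 2) - (1 / (b - a)) * ∫ u in a..b, f u| ≤
      ((b - a) / 2) * |deriv f ((a + b) / 2)| := by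
  have hq_pos : 0 < q := hq ▸ div_pos (by linarith) (by linarith)
  have hderiv : ∀ u ∈ Icc a b, HasDerivWithinAt f (deriv f u) (Icc a b) u := fun u hu =>
    (hf u (hIci (ha.trans hu.1))).hasDerivAt.hasDerivWithinAt
  have hquasi : QuasiconvexOn ℝ (Icc a b) fun u => |deriv f u| :=
    quasiconvexOn_of_convexOn_rpow hq_pos (fun _ _ => abs_nonneg _) hconv
  calc |f ((a + b) / 2) - (1 / (b - a)) * ∫ u in a..b, f u|
      ≤ (b - a) / 4 * max |deriv f a| |deriv f b| := by
        simpa using stmt_10_general hab hderiv hquasi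
    _ = (b - a) / 4 * |deriv f ((a + b) / 2)| := by rw [heq1, max_self, heq2]
    _ ≤ (b - a) / 2 * |deriv f ((a + b) / 2)| := by gcongr; linarith
end

section
/- Let 0 ≤ a < b, let n ≥ 2 be an integer, and let m ∈ (0,1]. Assume that the function x ↦ n·x^{n-1} is m-convex on [0,∞). Then |((a+b)/2)^n - (b^{n+1} - a^{n+1})/((n+1)·(b-a))| ≤ n·((b-a)/8)·min{ a^{n-1} + m·(b/m)^{n-1} , b^{n-1} + m·(a/m)^{n-1} }. -/
open Set

/-!
Integrating by parts on the two halves of `[a, b]` writes the midpoint defect of `f` as the integral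
of `f'` against a kernel `K` with `|K x| = min (x - a) (b - x)`. If `g` dominates `|f'|` and is
`m`-convex, then `b = m * (b / m)` puts `g` below the chord with endpoint values `g a` and
`m * g (b / m)`, and exchanging `a` and `b` gives a second chord. A chord with endpoint values `A`
and `B` integrates against `|K|` to `(b - a) ^ 2 / 8 * (A + B)`. For `f x = x ^ n` the derivative
itself serves as `g`.
-/

/-- `g` is `m`-convex on `s` in the sense of Toader; `m = 1` is ordinary convexity. The set `s`
is not required to contain the points `t * x + m * (1 - t) * y`. -/
def MConvexOn (m : ℝ) (s : Set ℝ) (g : ℝ → ℝ) : Prop :=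
  ∀ x ∈ s, ∀ y ∈ s, ∀ t ∈ Icc (0 : ℝ) 1,
    g (t * x + m * (1 - t) * y) ≤ t * g x + m * (1 - t) * g y

theorem MConvexOn.le_chord {m a b t : ℝ} {s : Set ℝ} {g : ℝ → ℝ} (hg : MConvexOn m s g)
    (hm : m ≠ 0) (ha : a ∈ s) (hb : b / m ∈ s) (ht : t ∈ Icc (0 : ℝ) 1) :
    g (t * a + (1 - t) * b) ≤ t * g a + (1 - t) * (m * g (b / m)) := by
  have hb_scale : m * (1 - t) * (b / m) = (1 - t) * b := by field_simp
  have hconv := hg a ha (b / m) hb t ht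
  rw [hb_scale] at hconv
  linarith

section MidpointDefect

variable {a b c A B : ℝ} {f f' : ℝ → ℝ}

theorem integral_sub_mul_deriv (hf : ∀ x ∈ uIcc a b, HasDerivAt f (f' x) x)
    (hf' : IntervalIntegrable f' MeasureTheory.volume a b) (e : ℝ) :
    ∫ x in a..b, (x - e) * f' x = (b - e) * f b - (a - e) * f a - ∫ x in a..b, f x := by
  simpa using intervalIntegral.integral_mul_deriv_eq_deriv_mul (u := fun x => x - e)
    (fun x _ => (hasDerivAt_id x).sub_const e) hf intervalIntegrable_const hf'

theorem mul_sub_integral_eq_integral_add_integral (hc : c ∈ uIcc a b)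
    (hf : ∀ x ∈ uIcc a b, HasDerivAt f (f' x) x)
    (hf' : IntervalIntegrable f' MeasureTheory.volume a b) :
    (b - a) * f c - ∫ x in a..b, f x =
      (∫ x in a..c, (x - a) * f' x) + ∫ x in c..b, (x - b) * f' x := by
  have hac : uIcc a c ⊆ uIcc a b := uIcc_subset_uIcc_left hc
  have hcb : uIcc c b ⊆ uIcc a b := uIcc_subset_uIcc_right hc
  have hf_cont : ContinuousOn f (uIcc a b) :=
    fun x hx => (hf x hx).continuousAt.continuousWithinAt
  have hsplit : (∫ x in a..c, f x) + ∫ x in c..b, f x = ∫ x in a..b, f x :=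
    intervalIntegral.integral_add_adjacent_intervals
      (hf_cont.mono hac).intervalIntegrable (hf_cont.mono hcb).intervalIntegrable
  rw [integral_sub_mul_deriv (fun x hx => hf x (hac hx)) (hf'.mono_set hac),
    integral_sub_mul_deriv (fun x hx => hf x (hcb hx)) (hf'.mono_set hcb), ← hsplit]
  ring

theorem integral_sub_mul_affine (a b p q : ℝ) :
    ∫ x in a..b, (x - a) * (p + q * (x - a)) = p * (b - a) ^ 2 / 2 + q * (b - a) ^ 3 / 3 := by
  have hprim (x : ℝ) : HasDerivAt (fun x => p * (x - a) ^ 2 / 2 + q * (x - a) ^ 3 / 3)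
      ((x - a) * (p + q * (x - a))) x := by
    have hlin := (hasDerivAt_id x).sub_const a
    refine ((((hlin.fun_pow 2).const_mul p).div_const 2).add
      (((hlin.fun_pow 3).const_mul q).div_const 3)).congr_deriv ?_
    simp only [id_eq]
    ring
  rw [intervalIntegral.integral_eq_sub_of_hasDerivAt (fun x _ => hprim x)
    (Continuous.intervalIntegrable (by fun_prop) a b)]
  ring

theorem abs_integral_sub_left_mul_le_of_abs_le_affine {p q : ℝ} (hab : a ≤ b)
    (h : ∀ x ∈ Icc a b, |f x| ≤ p + q * (x - a)) :
    |∫ x in a..b, (x - a) * f x| ≤ p * (b - a) ^ 2 / 2 + q * (b - a) ^ 3 / 3 := by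
  rw [← integral_sub_mul_affine, ← Real.norm_eq_abs]
  have hint : IntervalIntegrable (fun x => (x - a) * (p + q * (x - a))) MeasureTheory.volume a b :=
    Continuous.intervalIntegrable (by fun_prop) a b
  refine intervalIntegral.norm_integral_le_of_norm_le hab (.of_forall fun x hx => ?_) hint
  rw [Real.norm_eq_abs, abs_mul, abs_of_pos (sub_pos.2 hx.1)]
  exact mul_le_mul_of_nonneg_left (h x (Ioc_subset_Icc_self hx)) (sub_nonneg.2 hx.1.le)

theorem abs_integral_sub_right_mul_le_of_abs_le_affine {p q : ℝ} (hab : a ≤ b)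
    (h : ∀ x ∈ Icc a b, |f x| ≤ p + q * (b - x)) :
    |∫ x in a..b, (x - b) * f x| ≤ p * (b - a) ^ 2 / 2 + q * (b - a) ^ 3 / 3 := by
  have hreflect : ∫ x in a..b, (x - b) * f x = -∫ x in -b..-a, (x - -b) * f (-x) := by
    rw [← intervalIntegral.integral_comp_neg, ← intervalIntegral.integral_neg]
    simp only [neg_neg]
    congr! 2
    ring
  have hbound (x : ℝ) (hx : x ∈ Icc (-b) (-a)) : |f (-x)| ≤ p + q * (x - -b) := by
    convert h (-x) ⟨le_neg_of_le_neg hx.2, neg_le_of_neg_le hx.1⟩ using 3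
    ring
  rw [hreflect, abs_neg]
  convert abs_integral_sub_left_mul_le_of_abs_le_affine (neg_le_neg hab) hbound using 4 <;> ring

theorem le_affine_of_forall_le_chord {g : ℝ → ℝ} {x : ℝ} (hab : a < b)
    (hchord : ∀ t ∈ Icc (0 : ℝ) 1, g (t * a + (1 - t) * b) ≤ t * A + (1 - t) * B)
    (hx : x ∈ Icc a b) : g x ≤ A + (B - A) / (b - a) * (x - a) := by
  have hd : 0 < b - a := sub_pos.2 hab
  have ht : (b - x) / (b - a) ∈ Icc (0 : ℝ) 1 :=
    ⟨div_nonneg (sub_nonneg.2 hx.2) hd.le, (div_le_one hd).2 (sub_le_sub_left hx.1 b)⟩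
  convert hchord _ ht using 1
  · congr 1
    field_simp
    ring
  · field_simp
    ring

theorem abs_midpoint_sub_average_le_of_abs_deriv_le_chord (hab : a < b)
    (hf : ∀ x ∈ Icc a b, HasDerivAt f (f' x) x)
    (hf' : IntervalIntegrable f' MeasureTheory.volume a b)
    (hchord : ∀ t ∈ Icc (0 : ℝ) 1, |f' (t * a + (1 - t) * b)| ≤ t * A + (1 - t) * B) :
    |f ((a + b) / 2) - (∫ x in a..b, f x) / (b - a)| ≤ (b - a) / 8 * (A + B) := by
  have hd : 0 < b - a := sub_pos.2 hab
  have hleft (x : ℝ) (hx : x ∈ Icc a b) : |f' x| ≤ A + (B - A) / (b - a) * (x - a) :=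
    le_affine_of_forall_le_chord (g := fun x => |f' x|) hab hchord hx
  have hright (x : ℝ) (hx : x ∈ Icc a b) : |f' x| ≤ B + (A - B) / (b - a) * (b - x) := by
    convert hleft x hx using 1
    field_simp
    ring
  have ha_mid : a ≤ (a + b) / 2 := by linarith
  have hmid_b : (a + b) / 2 ≤ b := by linarith
  have hleft_half := abs_integral_sub_left_mul_le_of_abs_le_affine ha_mid
    fun x hx => hleft x ⟨hx.1, hx.2.trans hmid_b⟩
  have hright_half := abs_integral_sub_right_mul_le_of_abs_le_affine hmid_b
    fun x hx => hright x ⟨ha_mid.trans hx.1, hx.2⟩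
  have hmid : (a + b) / 2 ∈ uIcc a b := Icc_subset_uIcc ⟨ha_mid, hmid_b⟩
  have hdefect := mul_sub_integral_eq_integral_add_integral hmid (uIcc_of_le hab.le ▸ hf) hf'
  rw [← mul_le_mul_iff_right₀ hd]
  calc (b - a) * |f ((a + b) / 2) - (∫ x in a..b, f x) / (b - a)|
      = |(b - a) * f ((a + b) / 2) - ∫ x in a..b, f x| := by
        rw [← abs_of_pos hd, ← abs_mul, abs_of_pos hd, mul_sub, mul_div_cancel₀ _ hd.ne']
    _ ≤ _ := hdefect ▸ (abs_add_le _ _).trans (add_le_add hleft_half hright_half)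
    _ = (b - a) * ((b - a) / 8 * (A + B)) := by
        field_simp
        ring

theorem abs_midpoint_sub_average_le_of_abs_deriv_le_mConvexOn {m : ℝ} {s : Set ℝ} {g : ℝ → ℝ}
    (hab : a < b) (hm : m ≠ 0) (hf : ∀ x ∈ Icc a b, HasDerivAt f (f' x) x)
    (hf' : IntervalIntegrable f' MeasureTheory.volume a b)
    (hle : ∀ x ∈ Icc a b, |f' x| ≤ g x) (hg : MConvexOn m s g)
    (ha : a ∈ s) (hb : b ∈ s) (ham : a / m ∈ s) (hbm : b / m ∈ s) :
    |f ((a + b) / 2) - (∫ x in a..b, f x) / (b - a)| ≤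
      (b - a) / 8 * min (g a + m * g (b / m)) (g b + m * g (a / m)) := by
  have hmem (t : ℝ) (ht : t ∈ Icc (0 : ℝ) 1) : t * a + (1 - t) * b ∈ Icc a b :=
    convex_Icc a b (left_mem_Icc.2 hab.le) (right_mem_Icc.2 hab.le) ht.1 (sub_nonneg.2 ht.2)
      (add_sub_cancel t 1)
  rw [mul_min_of_nonneg _ _ (div_nonneg (sub_nonneg.2 hab.le) (by norm_num)),
    add_comm (g b)]
  refine le_min ?_ ?_ <;>
    refine abs_midpoint_sub_average_le_of_abs_deriv_le_chord hab hf hf' fun t ht =>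
      (hle _ (hmem t ht)).trans ?_
  · exact hg.le_chord hm ha hbm ht
  · have hswap := hg.le_chord hm hb ham (Icc.mem_iff_one_sub_mem.1 ht)
    rwa [sub_sub_cancel, add_comm, add_comm (_ * g b)] at hswap

end MidpointDefect

/-- Proposition 3.1: special-means inequality `|Aⁿ(a,b) - Lₙⁿ(a,b)| ≤ ...` for the
`m`-convex function `x ↦ n x^{n-1}` (the derivative of `x ↦ xⁿ`). -/
theorem stmt_13 (a b : ℝ) (ha : 0 ≤ a) (hab : a < b)
    (n : ℕ) (hn : 2 ≤ n)
    (m : ℝ) (hm0 : 0 < m) (hm1 : m ≤ 1)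
    (hmc : ∀ x ∈ Set.Ici (0:ℝ), ∀ y ∈ Set.Ici (0:ℝ), ∀ t ∈ Set.Icc (0:ℝ) 1,
      (n : ℝ) * (t * x + m * (1 - t) * y) ^ (n - 1) ≤
        t * ((n : ℝ) * x ^ (n - 1)) + m * (1 - t) * ((n : ℝ) * y ^ (n - 1))) :
    |((a + b) / 2) ^ n - (b ^ (n + 1) - a ^ (n + 1)) / (((n : ℝ) + 1) * (b - a))| ≤
      (n : ℝ) * ((b - a) / 8) *
        min (a ^ (n - 1) + m * (b / m) ^ (n - 1))
          (b ^ (n - 1) + m * (a / m) ^ (n - 1)) := by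
  have hb : 0 ≤ b := ha.trans hab.le
  have hderiv_abs (x : ℝ) (hx : x ∈ Icc a b) : |n * x ^ (n - 1)| ≤ n * x ^ (n - 1) :=
    (abs_of_nonneg (mul_nonneg n.cast_nonneg (pow_nonneg (ha.trans hx.1) _))).le
  have hconv : MConvexOn m (Ici 0) fun x => n * x ^ (n - 1) := hmc
  have hmid := abs_midpoint_sub_average_le_of_abs_deriv_le_mConvexOn hab hm0.ne'
    (fun x _ => hasDerivAt_pow n x) (Continuous.intervalIntegrable (by fun_prop) a b)
    hderiv_abs hconv ha hb (div_nonneg ha hm0.le) (div_nonneg hb hm0.le)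
  rw [integral_pow, div_div] at hmid
  rw [mul_comm (n : ℝ), mul_assoc, mul_min_of_nonneg _ _ n.cast_nonneg]
  simpa only [mul_add, mul_left_comm (n : ℝ)] using hmid
end
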